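/- arXiv:2404.04822 — 2 statements merged into one kernel-verified Lean document; each statement's English description precedes it below -/
import Mathlib

section
/- Within the domain of monotonic preferences, the conditionally lexicographic domain is a maximal domain on which individual-good efficiency and Pareto efficiency are equivalent: for every finite set O of objects and every strict preference P_1 on 2^O that is monotonic but not conditionally lexicographic, there exist a finite set N of agents containing agent 1 (with 2 ≤ |N| ≤ 3 and |O| ≥ |N|), lexicographic preferences P_j on 2^O for every agent j ∈ N ∖ {1}, and an allocation μ such that μ is individual-good efficient at the profile P = (P_j)_{j ∈ N} but not Pareto efficient at P. -/
attribute [local instance] Classical.propDecidable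

namespace Realloc

/-- A strict preference over bundles: a strict total order on `Finset O`. -/
structure Pref (O : Type) : Type where
  strict : Finset O → Finset O → Prop
  total : ∀ X Y : Finset O, strict X Y ∨ X = Y ∨ strict Y X
  irrefl : ∀ X : Finset O, ¬ strict X X
  trans : ∀ X Y Z : Finset O, strict X Y → strict Y Z → strict X Z

/-- The weak ("at least as good as") relation associated with a strict preference. -/
def Pref.weak {O : Type} (p : Pref O) (X Y : Finset O) : Prop :=
  p.strict X Y ∨ X = Y

/-- An allocation: nonempty pairwise disjoint bundles whose union is all of `O`. -/
structure Allocation (N O : Type) : Type where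
  bundle : N → Finset O
  nonempty : ∀ i : N, (bundle i).Nonempty
  disj : ∀ i j : N, i ≠ j → ∀ o : O, o ∈ bundle i → o ∉ bundle j
  cover : ∀ o : O, ∃ i : N, o ∈ bundle i

variable {N O : Type}

/-- Two preferences induce the same marginal (singleton) ranking over objects. -/
def MargEq (p q : Pref O) : Prop :=
  ∀ x y : O, p.strict {x} {y} ↔ q.strict {x} {y}

/-- Responsive preferences. -/
def Responsive [DecidableEq O] (p : Pref O) : Prop :=
  ∀ (X : Finset O) (y z : O), y ∉ X → z ∉ X →
    (p.strict (insert y X) (insert z X) ↔ p.strict {y} {z})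

/-- Lexicographic preferences: `X` is preferred to `Y` iff the best object of the
symmetric difference belongs to `X`. -/
def Lexicographic [DecidableEq O] (p : Pref O) : Prop :=
  ∀ X Y : Finset O, X ≠ Y →
    (p.strict X Y ↔
      ∃ x ∈ X \ Y, ∀ y ∈ (X \ Y) ∪ (Y \ X), y ≠ x → p.strict {x} {y})

/-- Conditionally lexicographic preferences. -/
def CondLex [DecidableEq O] (p : Pref O) : Prop :=
  ∀ X Y : Finset O, Disjoint X Y → X.Nonempty →
    ∃! x : O, x ∈ X ∧ ∀ Z : Finset O, Z ⊆ X.erase x → p.strict (insert x Y) (Y ∪ Z)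

/-- Monotonic preferences. -/
def Monot (p : Pref O) : Prop :=
  ∀ X Y : Finset O, Y ⊆ X → p.weak X Y

/-- `p'` is a subset-drop strategy for `p` (relative to endowment `ωi`):
some set `X ⊆ O ∖ ωi` is moved to the bottom of the marginal ranking, preserving
the relative marginal order within `X` and within its complement. -/
def SubsetDropStrategy (ωi : Finset O) (p p' : Pref O) : Prop :=
  ∃ X : Set O, (∀ x ∈ X, x ∉ ωi) ∧
    (∀ x ∈ X, ∀ y ∈ X, (p.strict {x} {y} ↔ p'.strict {x} {y})) ∧
    (∀ x ∉ X, ∀ y ∉ X, (p.strict {x} {y} ↔ p'.strict {x} {y})) ∧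
    (∀ x ∈ X, ∀ y ∉ X, p'.strict {y} {x})

/-- `p'` is a drop strategy for `p`: a single object `x ∉ ωi` is moved to the bottom. -/
def DropStrategy (ωi : Finset O) (p p' : Pref O) : Prop :=
  ∃ x : O, x ∉ ωi ∧
    (∀ u v : O, u ≠ x → v ≠ x → (p.strict {u} {v} ↔ p'.strict {u} {v})) ∧
    (∀ y : O, y ≠ x → p'.strict {y} {x})

/-- `p'` is a truncation strategy for `p`: the tail set
`{o ∈ O ∖ ωi : {x} R {o}}` (for some object `x`) is moved to the bottom. -/
def TruncationStrategy (ωi : Finset O) (p p' : Pref O) : Prop :=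
  ∃ x : O,
    (∀ u v : O, (u ∉ ωi ∧ p.weak {x} {u}) → (v ∉ ωi ∧ p.weak {x} {v}) →
      (p.strict {u} {v} ↔ p'.strict {u} {v})) ∧
    (∀ u v : O, ¬(u ∉ ωi ∧ p.weak {x} {u}) → ¬(v ∉ ωi ∧ p.weak {x} {v}) →
      (p.strict {u} {v} ↔ p'.strict {u} {v})) ∧
    (∀ u v : O, (u ∉ ωi ∧ p.weak {x} {u}) → ¬(v ∉ ωi ∧ p.weak {x} {v}) →
      p'.strict {v} {u})

/-- There is a Pareto-improving trading cycle at the assignment `μ`: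
a cyclic sequence of `k+1 ≥ 1` distinct objects and distinct agents, each object owned
(at `μ`) by its agent, such that every agent on the cycle strictly gains by swapping
the object she relinquishes for the object she points to. -/
def ParetoImprovingCycleAt [DecidableEq O] (pref : N → Pref O) (μ : N → Finset O) : Prop :=
  ∃ (k : ℕ) (obj : Fin (k + 1) → O) (ag : Fin (k + 1) → N),
    Function.Injective obj ∧ Function.Injective ag ∧
    (∀ ℓ : Fin (k + 1), obj ℓ ∈ μ (ag ℓ)) ∧
    (∀ ℓ : Fin (k + 1),
      (pref (ag ℓ)).strict ((insert (obj (ℓ + 1)) (μ (ag ℓ))).erase (obj ℓ)) (μ (ag ℓ)))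

/-- Individual-good efficiency of an assignment at a profile. -/
def IGEat [DecidableEq O] (pref : N → Pref O) (μ : N → Finset O) : Prop :=
  ¬ ParetoImprovingCycleAt pref μ

/-- `ν` Pareto dominates `μ` at the profile `pref`. -/
def ParetoDominates (pref : N → Pref O) (ν μ : N → Finset O) : Prop :=
  (∀ i, (pref i).weak (ν i) (μ i)) ∧ ∃ j, (pref j).strict (ν j) (μ j)

/-- Pareto efficiency of an assignment at a profile. -/
def ParetoEffAt (pref : N → Pref O) (μ : N → Finset O) : Prop :=
  ∀ ν : Allocation N O, ¬ ParetoDominates pref ν.bundle μ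

/-- The marginally most-preferred object of a (nonempty) finite set of objects. -/
noncomputable def Pref.best [Nonempty O] (p : Pref O) (S : Finset O) : O :=
  if h : ∃ x : O, x ∈ S ∧ ∀ y ∈ S, p.weak {x} {y} then h.choose
  else Classical.arbitrary O

/-- The conditionally most-preferred object of `S` given the already-held bundle `Y`. -/
noncomputable def Pref.cbest [Nonempty O] [DecidableEq O] (p : Pref O) (S Y : Finset O) : O :=
  if h : ∃ x : O, x ∈ S ∧ ∀ Z : Finset O, Z ⊆ S.erase x → p.strict (insert x Y) (Y ∪ Z)
  then h.choose else Classical.arbitrary O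

/-- The initial owner of an object. -/
noncomputable def Allocation.owner (ω : Allocation N O) (o : O) : N :=
  (ω.cover o).choose

/-- One pass of the generalized TTC algorithm, with fuel.  At each step every agent points
to her marginally best remaining object and every remaining object points to its owner;
the objects lying on cycles of this functional graph (the periodic points of `g`) are
traded: the owner of a cycling object receives the object she points to. -/
noncomputable def TTCaux [Nonempty O] [DecidableEq O] (pref : N → Pref O) (own : O → N) :
    ℕ → Finset O → N → Finset O
  | 0, _, _ => ∅
  | fuel + 1, S, i =>
      let g : O → O := fun o => (pref (own o)).best S
      let C : Finset O := S.filter fun o => ∃ k : ℕ, 0 < k ∧ g^[k] o = o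
      if S.Nonempty then
        ((C.filter fun o => own o = i).image g) ∪ TTCaux pref own fuel (S \ C) i
      else ∅

/-- The generalized Top Trading Cycles rule: the bundle received by agent `i`. -/
noncomputable def TTC [Fintype O] [Nonempty O] [DecidableEq O]
    (pref : N → Pref O) (ω : Allocation N O) (i : N) : Finset O :=
  TTCaux pref ω.owner (Fintype.card O + 1) Finset.univ i

/-- One pass of the Augmented TTC algorithm, with fuel: agents point to their
conditionally most-preferred remaining object given the bundle assigned so far. -/
noncomputable def ATTCaux [Nonempty O] [DecidableEq O] (pref : N → Pref O) (own : O → N) :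
    ℕ → Finset O → (N → Finset O) → N → Finset O
  | 0, _, μ => μ
  | fuel + 1, S, μ =>
      let g : O → O := fun o => (pref (own o)).cbest S (μ (own o))
      let C : Finset O := S.filter fun o => ∃ k : ℕ, 0 < k ∧ g^[k] o = o
      if S.Nonempty then
        ATTCaux pref own fuel (S \ C) (fun j => μ j ∪ ((C.filter fun o => own o = j).image g))
      else μ

/-- The Augmented Top Trading Cycles rule: the bundle received by agent `i`. -/
noncomputable def ATTC [Fintype O] [Nonempty O] [DecidableEq O]
    (pref : N → Pref O) (ω : Allocation N O) (i : N) : Finset O :=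
  ATTCaux pref ω.owner (Fintype.card O + 1) Finset.univ (fun _ => ∅) i

/-- Conditional marginal preference of `p` given the bundle `Y`:
`x` is conditionally better than `y`. -/
def CMarg [DecidableEq O] (p : Pref O) (Y : Finset O) (x y : O) : Prop :=
  p.strict ((insert x Y).erase y) ((insert y Y).erase x)

/-- Weak conditional marginal preference. -/
def CMargWeak [DecidableEq O] (p : Pref O) (Y : Finset O) (x y : O) : Prop :=
  CMarg p Y x y ∨ x = y

/-- Drop strategy on the conditionally lexicographic domain: `x ∉ ωi` becomes the worst,
with preferences over bundles avoiding `x` unchanged. -/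
def DropStrategyCL (ωi : Finset O) (p p' : Pref O) : Prop :=
  ∃ x : O, x ∉ ωi ∧
    (∀ Y : Finset O, Y.Nonempty → x ∉ Y → p'.strict Y {x}) ∧
    (∀ Y Z : Finset O, x ∉ Y → x ∉ Z → (p'.strict Y Z ↔ p.strict Y Z))

section Rules

variable [DecidableEq O]

/-- Balancedness of a rule on the domain `D`. -/
def RBAL (D : Pref O → Prop) (ω : Allocation N O)
    (φ : (N → Pref O) → Allocation N O) : Prop :=
  ∀ P : N → Pref O, (∀ i, D (P i)) → ∀ i, ((φ P).bundle i).card = (ω.bundle i).card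

/-- Individual-good efficiency of a rule on the domain `D`. -/
def RIGE (D : Pref O → Prop) (φ : (N → Pref O) → Allocation N O) : Prop :=
  ∀ P : N → Pref O, (∀ i, D (P i)) → IGEat P ((φ P).bundle)

/-- Pareto efficiency of a rule on the domain `D`. -/
def RPE (D : Pref O → Prop) (φ : (N → Pref O) → Allocation N O) : Prop :=
  ∀ P : N → Pref O, (∀ i, D (P i)) → ParetoEffAt P ((φ P).bundle)

/-- Individual rationality of a rule on the domain `D`. -/
def RIR (D : Pref O → Prop) (ω : Allocation N O)
    (φ : (N → Pref O) → Allocation N O) : Prop :=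
  ∀ P : N → Pref O, (∀ i, D (P i)) → ∀ i, (P i).weak ((φ P).bundle i) (ω.bundle i)

/-- The worst-endowment lower bound of a rule on the domain `D`: no agent receives an
object marginally worse than the marginally worst object of her endowment. -/
def RWELB (D : Pref O → Prop) (ω : Allocation N O)
    (φ : (N → Pref O) → Allocation N O) : Prop :=
  ∀ P : N → Pref O, (∀ i, D (P i)) → ∀ i, ∀ o ∈ (φ P).bundle i,
    ∀ w ∈ ω.bundle i, (∀ y ∈ ω.bundle i, (P i).weak {y} {w}) → (P i).weak {o} {w}

/-- Marginality of a rule on the domain `D`. -/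
def RMAR (D : Pref O → Prop) (φ : (N → Pref O) → Allocation N O) : Prop :=
  ∀ P P' : N → Pref O, (∀ i, D (P i)) → (∀ i, D (P' i)) →
    (∀ i, MargEq (P i) (P' i)) → ∀ i, (φ P).bundle i = (φ P').bundle i

variable [DecidableEq N]

/-- Truncation-proofness of a rule on the domain `D`. -/
def RTP (D : Pref O → Prop) (ω : Allocation N O)
    (φ : (N → Pref O) → Allocation N O) : Prop :=
  ∀ P : N → Pref O, (∀ i, D (P i)) → ∀ i : N, ∀ p' : Pref O, D p' →
    TruncationStrategy (ω.bundle i) (P i) p' →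
    (P i).weak ((φ P).bundle i) ((φ (Function.update P i p')).bundle i)

/-- Drop strategy-proofness of a rule on the domain `D`. -/
def RDSP (D : Pref O → Prop) (ω : Allocation N O)
    (φ : (N → Pref O) → Allocation N O) : Prop :=
  ∀ P : N → Pref O, (∀ i, D (P i)) → ∀ i : N, ∀ p' : Pref O, D p' →
    DropStrategy (ω.bundle i) (P i) p' →
    (P i).weak ((φ P).bundle i) ((φ (Function.update P i p')).bundle i)

/-- Subset-drop strategy-proofness of a rule on the domain `D`. -/
def RSDSP (D : Pref O → Prop) (ω : Allocation N O)
    (φ : (N → Pref O) → Allocation N O) : Prop :=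
  ∀ P : N → Pref O, (∀ i, D (P i)) → ∀ i : N, ∀ p' : Pref O, D p' →
    SubsetDropStrategy (ω.bundle i) (P i) p' →
    (P i).weak ((φ P).bundle i) ((φ (Function.update P i p')).bundle i)

/-- Worst-endowment lower bound on the conditionally lexicographic domain, formulated
with conditional marginal preferences. -/
def RWELBCL (D : Pref O → Prop) (ω : Allocation N O)
    (φ : (N → Pref O) → Allocation N O) : Prop :=
  ∀ P : N → Pref O, (∀ i, D (P i)) → ∀ i, ∀ o ∈ (φ P).bundle i,
    ∀ w ∈ ω.bundle i,
      (∀ y ∈ ω.bundle i, CMargWeak (P i) ((φ P).bundle i) y w) →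
      CMargWeak (P i) ((φ P).bundle i) o w

/-- Drop strategy-proofness on the conditionally lexicographic domain. -/
def RDSPCL (D : Pref O → Prop) (ω : Allocation N O)
    (φ : (N → Pref O) → Allocation N O) : Prop :=
  ∀ P : N → Pref O, (∀ i, D (P i)) → ∀ i : N, ∀ p' : Pref O, D p' →
    DropStrategyCL (ω.bundle i) (P i) p' →
    (P i).weak ((φ P).bundle i) ((φ (Function.update P i p')).bundle i)

end Rules

/-- Agent `i`'s opportunity set under TTC when reporting `p`: the set of bundles
she may receive as others' (responsive) reports vary. -/
def Opp [Fintype O] [Nonempty O] [DecidableEq O] (ω : Allocation N O) (i : N)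
    (p : Pref O) : Set (Finset O) :=
  {A | ∃ Q : N → Pref O, (∀ j, Responsive (Q j)) ∧ Q i = p ∧ TTC Q ω i = A}

/-! If `p₁` is monotonic but not conditionally lexicographic, there are disjoint `X` and `Y` such
that an agent with preference `p₁` who holds `Y` would, for every object of `X`, rather receive all
the others than that one. Let `x` be the best single object of `X` for her, given `Y`. Give her
`Y ∪ {x}`, and everything else to a lexicographic agent who ranks the objects outside `X ∪ Y` first,
then `x`, then `X ∖ {x}`, then `Y`. Exchanging `x` for the whole of `X ∖ {x}` improves both agents,
but the only one-for-one exchanges acceptable to the second agent bring that agent `x` for one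
object of `X`, and the first agent declines these by the choice of `x`. So two agents always
suffice. -/

namespace Pref

theorem not_strict_of_strict (p : Pref O) {X Y : Finset O} (h : p.strict X Y) : ¬ p.strict Y X :=
  fun h' => p.irrefl X (p.trans X Y X h h')

theorem not_strict_of_weak (p : Pref O) {X Y : Finset O} (h : p.weak X Y) : ¬ p.strict Y X := by
  rcases h with h | rfl
  · exact p.not_strict_of_strict h
  · exact p.irrefl X

theorem strict_or_weak (p : Pref O) (X Y : Finset O) : p.strict X Y ∨ p.weak Y X := by
  rcases p.total X Y with h | h | h
  exacts [Or.inl h, Or.inr (Or.inr h.symm), Or.inr (Or.inl h)]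

theorem strict_of_strict_of_weak (p : Pref O) {X Y Z : Finset O} (hXY : p.strict X Y)
    (hYZ : p.weak Y Z) : p.strict X Z := by
  rcases hYZ with hYZ | rfl
  exacts [p.trans X Y Z hXY hYZ, hXY]

theorem exists_forall_weak (p : Pref O) {ι : Type*} (f : ι → Finset O) {s : Finset ι}
    (hs : s.Nonempty) : ∃ i ∈ s, ∀ j ∈ s, p.weak (f i) (f j) := by
  induction hs using Finset.Nonempty.cons_induction with
  | singleton i => exact ⟨i, by simp, by simp [weak]⟩
  | cons i s _ _ ih =>
    obtain ⟨j, hj, hbest⟩ := ih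
    simp only [Finset.mem_cons, exists_eq_or_imp, forall_eq_or_imp]
    rcases p.strict_or_weak (f i) (f j) with h | h
    · exact Or.inl ⟨Or.inr rfl, fun k hk => Or.inl (p.strict_of_strict_of_weak h (hbest k hk))⟩
    · exact Or.inr ⟨j, hj, h, hbest⟩

theorem eq_of_forall_strict_insert [DecidableEq O] (p : Pref O) {x y : O} {X Y : Finset O}
    (hxX : x ∈ X) (hyX : y ∈ X) (hx : ∀ Z ⊆ X.erase x, p.strict (insert x Y) (Y ∪ Z))
    (hy : ∀ Z ⊆ X.erase y, p.strict (insert y Y) (Y ∪ Z)) : x = y := by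
  by_contra hne
  have hxy := hx {y} (by simp [hyX, Ne.symm hne])
  have hyx := hy {x} (by simp [hxX, hne])
  rw [Finset.union_comm, ← Finset.insert_eq] at hxy hyx
  exact p.not_strict_of_strict hxy hyx

/-- The lexicographic preference whose ranking of objects is pulled back along `f`, larger values
being better: bundles are compared in the colexicographic order of their images. -/
def lexOfRank {α : Type*} [LinearOrder α] (f : O ↪ α) : Pref O where
  strict X Y := toColex (Y.map f) < toColex (X.map f)
  total X Y := by
    rcases lt_trichotomy (toColex (Y.map f)) (toColex (X.map f)) with h | h | h
    exacts [Or.inl h, Or.inr (Or.inl (Finset.map_injective f (toColex_inj.mp h)).symm),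
      Or.inr (Or.inr h)]
  irrefl _ := lt_irrefl _
  trans _ _ _ h₁ h₂ := h₂.trans h₁

section LexOfRank

variable {α : Type*} [LinearOrder α] (f : O ↪ α)

theorem lexOfRank_strict_singleton {x y : O} : (lexOfRank f).strict {x} {y} ↔ f y < f x := by
  simp only [lexOfRank, Finset.map_singleton, Finset.Colex.singleton_lt_singleton]

theorem lexOfRank_strict_iff {X Y : Finset O} :
    (lexOfRank f).strict X Y ↔ ∃ x ∈ X, x ∉ Y ∧ ∀ y ∈ Y, y ∉ X → f y < f x := by
  simp [lexOfRank, Finset.Colex.toColex_lt_toColex_iff_exists_forall_lt]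

theorem lexicographic_lexOfRank [DecidableEq O] : Lexicographic (lexOfRank f) := by
  intro X Y _
  rw [lexOfRank_strict_iff]
  simp only [lexOfRank_strict_singleton]
  constructor
  · rintro ⟨a, haX, haY, ha⟩
    obtain ⟨m, hm, hmax⟩ :=
      (X \ Y).exists_max_image f ⟨a, Finset.mem_sdiff.mpr ⟨haX, haY⟩⟩
    refine ⟨m, hm, fun y hy hym => ?_⟩
    rcases Finset.mem_union.mp hy with hy | hy
    · exact (hmax y hy).lt_of_ne (f.injective.ne hym)
    · obtain ⟨hyY, hyX⟩ := Finset.mem_sdiff.mp hy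
      exact (ha y hyY hyX).trans_le (hmax a (Finset.mem_sdiff.mpr ⟨haX, haY⟩))
  · rintro ⟨x, hx, hbest⟩
    obtain ⟨hxX, hxY⟩ := Finset.mem_sdiff.mp hx
    refine ⟨x, hxX, hxY, fun y hyY hyX => hbest y ?_ (ne_of_mem_of_not_mem hxX hyX).symm⟩
    exact Finset.mem_union_right _ (Finset.mem_sdiff.mpr ⟨hyY, hyX⟩)

end LexOfRank

end Pref

theorem exists_lexicographic_of_tier [DecidableEq O] {α : Type*} [LinearOrder α] (t : O → α) :
    ∃ q : Pref O, Lexicographic q ∧ ∀ x y, t y < t x → q.strict {x} {y} := by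
  -- Ties within a tier are broken by an arbitrary linear order on the objects.
  let _ : LinearOrder O := linearOrderOfSTO WellOrderingRel
  let f : O ↪ α ×ₗ O := ⟨fun o => toLex (t o, o), fun _ _ h => congrArg Prod.snd h⟩
  exact ⟨Pref.lexOfRank f, Pref.lexicographic_lexOfRank f, fun x y h =>
    (Pref.lexOfRank_strict_singleton f).mpr (Prod.Lex.left _ _ h)⟩

namespace Lexicographic

variable [DecidableEq O] {q : Pref O}

theorem monot (hq : Lexicographic q) : Monot q := by
  intro X Y hYX
  refine or_iff_not_imp_right.mpr fun hne => (hq X Y hne).mpr ?_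
  have hdiff : (X \ Y).Nonempty := Finset.sdiff_nonempty.mpr fun hXY => hne (hXY.antisymm hYX)
  obtain ⟨x, hx, hbest⟩ := q.exists_forall_weak (fun o => {o}) hdiff
  refine ⟨x, hx, fun y hy hyx => (hbest y ?_).resolve_right ?_⟩
  · rwa [Finset.sdiff_eq_empty_iff_subset.mpr hYX, Finset.union_empty] at hy
  · exact fun h => hyx (Finset.singleton_injective h).symm

theorem strict_compl_iff [Fintype O] (hq : Lexicographic q) {X Y : Finset O} :
    q.strict Xᶜ Yᶜ ↔ q.strict Y X := by
  rcases eq_or_ne X Y with rfl | hne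
  · exact iff_of_false (q.irrefl _) (q.irrefl _)
  · rw [hq _ _ (compl_injective.ne hne), hq _ _ hne.symm, compl_sdiff_compl, compl_sdiff_compl]

theorem strict_insert_union (hq : Lexicographic q) {x : O} {Y Z : Finset O} (hxY : x ∉ Y)
    (hx : ∀ z ∈ Z, q.strict {x} {z}) : q.strict (insert x Y) (Y ∪ Z) := by
  have hxZ : x ∉ Z := fun h => q.irrefl _ (hx x h)
  have hmem : x ∈ insert x Y \ (Y ∪ Z) := by simp [hxY, hxZ]
  have hne : insert x Y ≠ Y ∪ Z := fun h => by simp [h] at hmem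
  refine (hq _ _ hne).mpr ⟨x, hmem, fun y hy hyx => hx y ?_⟩
  simp only [Finset.mem_union, Finset.mem_sdiff, Finset.mem_insert] at hy
  tauto

theorem strict_singleton_of_strict_swap (hq : Lexicographic q) {X : Finset O} {a b : O}
    (ha : a ∉ X) (hb : b ∈ X) (h : q.strict ((insert a X).erase b) X) : q.strict {a} {b} := by
  have hne : (insert a X).erase b ≠ X := fun he => by
    rw [← he] at hb
    exact Finset.notMem_erase b _ hb
  obtain ⟨x, hx, hbest⟩ := (hq _ _ hne).mp h
  obtain rfl : x = a := by
    simp only [Finset.mem_sdiff, Finset.mem_erase, Finset.mem_insert] at hx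
    tauto
  exact hbest b (by simp [hb]) (ne_of_mem_of_not_mem hb ha)

end Lexicographic

namespace Monot

variable {p : Pref O}

theorem not_strict_of_subset (hp : Monot p) {X Y : Finset O} (h : Y ⊆ X) : ¬ p.strict Y X :=
  p.not_strict_of_weak (hp X Y h)

theorem nonempty_of_strict (hp : Monot p) {X Y : Finset O} (h : p.strict X Y) : X.Nonempty := by
  by_contra hX
  rw [Finset.not_nonempty_iff_eq_empty] at hX
  exact hp.not_strict_of_subset (hX ▸ Finset.empty_subset Y) h

theorem compl_nonempty_of_strict [Fintype O] [DecidableEq O] (hp : Monot p) {X Y : Finset O}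
    (h : p.strict X Y) : Yᶜ.Nonempty := by
  by_contra hY
  rw [Finset.not_nonempty_iff_eq_empty, Finset.compl_eq_empty_iff] at hY
  exact hp.not_strict_of_subset (hY ▸ Finset.subset_univ X) h

theorem strict_insert_union [DecidableEq O] (hp : Monot p) {x : O} {W Y Z : Finset O}
    (hxW : x ∉ W) (hxY : x ∉ Y) (h : ¬ p.strict (Y ∪ W) (insert x Y)) (hZW : Z ⊆ W) :
    p.strict (insert x Y) (Y ∪ Z) := by
  have hne : insert x Y ≠ Y ∪ W :=
    ne_of_mem_of_not_mem' (Finset.mem_insert_self x Y) (by simp [hxY, hxW])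
  have hstrict : p.strict (insert x Y) (Y ∪ W) :=
    ((p.strict_or_weak _ _).resolve_left h).resolve_right hne
  exact p.strict_of_strict_of_weak hstrict (hp _ _ (Finset.union_subset_union_right hZW))

theorem condLex_iff [DecidableEq O] (hp : Monot p) :
    CondLex p ↔ ∀ X Y : Finset O, Disjoint X Y → X.Nonempty →
      ∃ x ∈ X, ¬ p.strict (Y ∪ X.erase x) (insert x Y) := by
  refine forall₄_congr fun X Y hXY _ => ⟨?_, ?_⟩
  · rintro ⟨x, ⟨hx, hbest⟩, -⟩
    exact ⟨x, hx, p.not_strict_of_strict (hbest _ subset_rfl)⟩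
  · rintro ⟨x, hx, hnot⟩
    have hxY : x ∉ Y := Finset.disjoint_left.mp hXY hx
    have hbest : ∀ Z ⊆ X.erase x, p.strict (insert x Y) (Y ∪ Z) := fun Z hZ =>
      hp.strict_insert_union (Finset.notMem_erase x X) hxY hnot hZ
    exact ⟨x, ⟨hx, hbest⟩, fun x' hx' => p.eq_of_forall_strict_insert hx'.1 hx hx'.2 hbest⟩

end Monot

theorem igeAt_of_card_le_two [DecidableEq O] [Fintype N] (hN : Fintype.card N ≤ 2)
    {P : N → Pref O} {μ : N → Finset O} (hP : ∀ i, Monot (P i))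
    (hswap : ∀ i j, i ≠ j → ∀ a ∈ μ i, ∀ b ∈ μ j, (P i).strict ((insert b (μ i)).erase a) (μ i) →
      ¬ (P j).strict ((insert a (μ j)).erase b) (μ j)) :
    IGEat P μ := by
  rintro ⟨k, obj, ag, -, hag, hmem, himp⟩
  have hk : k + 1 ≤ 2 := by
    simpa only [Fintype.card_fin] using (Fintype.card_le_of_injective ag hag).trans hN
  obtain rfl | rfl : k = 0 ∨ k = 1 := by omega
  · have hdrop := himp 0
    rw [show (0 : Fin 1) + 1 = 0 from rfl, Finset.insert_eq_of_mem (hmem 0)] at hdrop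
    exact (hP (ag 0)).not_strict_of_subset (Finset.erase_subset (obj 0) _) hdrop
  · exact hswap (ag 0) (ag 1) (hag.ne zero_ne_one) (obj 0) (hmem 0) (obj 1) (hmem 1)
      (himp 0) (himp 1)

namespace Allocation

theorem card_le_card [Fintype N] [Fintype O] (μ : Allocation N O) :
    Fintype.card N ≤ Fintype.card O := by
  choose obj hobj using μ.nonempty
  refine Fintype.card_le_of_injective obj fun i j hij => ?_
  by_contra hne
  exact μ.disj i j hne (obj i) (hobj i) (hij ▸ hobj j)

variable [Fintype O] [DecidableEq O]

/-- The two-agent allocation giving `A` to agent `0` and all other objects to agent `1`. -/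
def ofCompl (A : Finset O) (hA : A.Nonempty) (hA' : Aᶜ.Nonempty) : Allocation (Fin 2) O where
  bundle := ![A, Aᶜ]
  nonempty := Fin.forall_fin_two.mpr ⟨hA, hA'⟩
  disj i j hij o := by
    fin_cases i <;> fin_cases j <;> simp_all
  cover o := by
    by_cases h : o ∈ A
    exacts [⟨0, h⟩, ⟨1, Finset.mem_compl.mpr h⟩]

end Allocation

section TwoAgents

variable [Fintype O] [DecidableEq O] {p q : Pref O} {A B : Finset O}

theorem igeAt_compl (hp : Monot p) (hq : Lexicographic q)
    (hswap : ∀ a ∈ A, ∀ b ∉ A, q.strict {a} {b} → ¬ p.strict ((insert b A).erase a) A) :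
    IGEat ![p, q] ![A, Aᶜ] := by
  have hexch : ∀ a ∈ A, ∀ b ∈ Aᶜ, q.strict ((insert a Aᶜ).erase b) Aᶜ →
      ¬ p.strict ((insert b A).erase a) A := fun a ha b hb h =>
    hswap a ha b (Finset.mem_compl.mp hb)
      (hq.strict_singleton_of_strict_swap (Finset.notMem_compl.mpr ha) hb h)
  refine igeAt_of_card_le_two (by simp) (Fin.forall_fin_two.mpr ⟨hp, hq.monot⟩) fun i j hij => ?_
  fin_cases i <;> fin_cases j
  · exact absurd rfl hij
  · exact fun a ha b hb h₁ h₂ => hexch a ha b hb h₂ h₁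
  · exact fun b hb a ha h₂ h₁ => hexch a ha b hb h₂ h₁
  · exact absurd rfl hij

theorem not_paretoEffAt_compl (hp : Monot p) (hq : Monot q) (hpBA : p.strict B A)
    (hqBA : q.strict Bᶜ Aᶜ) : ¬ ParetoEffAt ![p, q] ![A, Aᶜ] := fun h =>
  h (.ofCompl B (hp.nonempty_of_strict hpBA) (hq.nonempty_of_strict hqBA))
    ⟨Fin.forall_fin_two.mpr ⟨Or.inl hpBA, Or.inl hqBA⟩, 0, hpBA⟩

end TwoAgents

theorem exists_lexicographic_four_tier [DecidableEq O] {x : O} {X Y : Finset O}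
    (hXY : Disjoint X Y) (hx : x ∈ X) :
    ∃ q : Pref O, Lexicographic q ∧ (∀ b ∉ X ∪ Y, q.strict {b} {x}) ∧
      (∀ z ∈ X.erase x, q.strict {x} {z}) ∧ ∀ b ∉ Y, ∀ y ∈ Y, q.strict {b} {y} := by
  obtain ⟨q, hq, htier⟩ := exists_lexicographic_of_tier fun o =>
    if o ∈ Y then 0 else if o = x then 2 else if o ∈ X then 1 else 3
  have hnotMem : ∀ z ∈ X, z ∉ Y := fun _ hz => Finset.disjoint_left.mp hXY hz
  refine ⟨q, hq, fun b hb => htier b x ?_, fun z hz => htier x z ?_, fun b hb y hy => htier b y ?_⟩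
  · obtain ⟨hbX, hbY⟩ := Finset.notMem_union.mp hb
    simp [hnotMem x hx, hbX, hbY, (ne_of_mem_of_not_mem hx hbX).symm]
  · obtain ⟨hzx, hzX⟩ := Finset.mem_erase.mp hz
    simp [hnotMem x hx, hzx, hzX, hnotMem z hzX]
  · simp only [hb, hy, if_true, if_false]
    split_ifs <;> omega

theorem stmt18_general [Finite O] [DecidableEq O] (p₁ : Pref O) (hmono : Monot p₁)
    (hnotCL : ¬ CondLex p₁) :
    ∃ q : Pref O, Lexicographic q ∧ ∃ μ : Allocation (Fin 2) O,
      IGEat ![p₁, q] μ.bundle ∧ ¬ ParetoEffAt ![p₁, q] μ.bundle := by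
  have := Fintype.ofFinite O
  rw [hmono.condLex_iff] at hnotCL
  push Not at hnotCL
  obtain ⟨X, Y, hXY, hX, hdom⟩ := hnotCL
  obtain ⟨x, hx, hbest⟩ := p₁.exists_forall_weak (insert · Y) hX
  have hxY : x ∉ Y := Finset.disjoint_left.mp hXY hx
  obtain ⟨q, hq, hqtop, hqx, hqY⟩ := exists_lexicographic_four_tier hXY hx
  have hqdom : q.strict (Y ∪ X.erase x)ᶜ (insert x Y)ᶜ :=
    hq.strict_compl_iff.mpr (hq.strict_insert_union hxY hqx)
  refine ⟨q, hq, .ofCompl (insert x Y) (Finset.insert_nonempty x Y)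
    (hmono.compl_nonempty_of_strict (hdom x hx)), igeAt_compl hmono hq fun a ha b hb hab => ?_,
    not_paretoEffAt_compl hmono hq.monot (hdom x hx) hqdom⟩
  obtain ⟨hbx, hbY⟩ : b ≠ x ∧ b ∉ Y := by simpa using hb
  rcases Finset.mem_insert.mp ha with rfl | haY
  · have hbX : b ∈ X := by
      by_contra hbX
      exact q.not_strict_of_strict hab (hqtop b (Finset.notMem_union.mpr ⟨hbX, hbY⟩))
    rw [Finset.erase_insert_of_ne hbx, Finset.erase_insert hxY]
    exact p₁.not_strict_of_weak (hbest b hbX)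
  · exact absurd (hqY b hbY a haY) (q.not_strict_of_strict hab)

/-- Within monotonic preferences, the conditionally lexicographic domain is
a maximal domain on which IGE and PE are equivalent: for any monotonic but not
conditionally lexicographic preference `p₁` there are a society of 2 or 3 agents
(the number of agents is `m + 2 ∈ {2, 3}` and agent 1 is encoded as `0 : Fin (m + 2)`),
lexicographic preferences for the other agents, and an
allocation that is individual-good efficient but not Pareto efficient. -/
theorem stmt18 {O : Type} [Fintype O] [DecidableEq O]
    (p₁ : Pref O) (hmono : Monot p₁) (hnotCL : ¬ CondLex p₁) :
    ∃ m : ℕ, m ≤ 1 ∧ m + 2 ≤ Fintype.card O ∧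
      ∃ P : Fin (m + 2) → Pref O, P 0 = p₁ ∧
        (∀ j : Fin (m + 2), j ≠ 0 → Lexicographic (P j)) ∧
        ∃ μ : Allocation (Fin (m + 2)) O, IGEat P μ.bundle ∧ ¬ ParetoEffAt P μ.bundle := by
  obtain ⟨q, hq, μ, hμ⟩ := stmt18_general p₁ hmono hnotCL
  exact ⟨0, zero_le_one, by simpa using μ.card_le_card, ![p₁, q], rfl,
    Fin.forall_fin_two.mpr ⟨absurd rfl, fun _ => hq⟩, μ, hμ⟩

end Realloc
end

section
/- A strict preference on 2^O (O a finite set of objects) is lexicographic if and only if it is both conditionally lexicographic and responsive. -/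
attribute [local instance] Classical.propDecidable

namespace Realloc

variable {N O : Type}

/-!
Both directions compare the best object of a set `X` with the object that conditional
lexicography selects from `X` given a disjoint bundle `Y`. Under responsiveness the two coincide:
testing the selected object against a single `y ∈ X` amounts to comparing singletons. Applied to
`X ∆ Y` given `X ∩ Y`, this shows that if the best object `x` of `X ∆ Y` lies in `X`, then
`{x} ∪ (X ∩ Y)` is preferred to `Y`; its superset `X` is at least as good, because adding objects
always improves a bundle.
-/

open scoped symmDiff

namespace Pref

variable {p : Pref O} {S T : Finset O} {x y : O}

-- With `strict` read as `<`, better bundles are smaller.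
instance (p : Pref O) : IsStrictTotalOrder (Finset O) p.strict where
  trichotomous X Y hXY hYX := ((p.total X Y).resolve_left hXY).resolve_right hYX
  irrefl := p.irrefl
  trans := p.trans

/-- `x` is the best object of `S` in the marginal ranking, i.e. the ranking of singletons. -/
def IsBest (p : Pref O) (S : Finset O) (x : O) : Prop :=
  x ∈ S ∧ ∀ y ∈ S, y ≠ x → p.strict {x} {y}

/-- `x` is the object of `X` that conditional lexicography selects given the bundle `Y`, as in the
definition of `CondLex`. -/
def IsCondBest [DecidableEq O] (p : Pref O) (X Y : Finset O) (x : O) : Prop :=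
  x ∈ X ∧ ∀ Z : Finset O, Z ⊆ X.erase x → p.strict (insert x Y) (Y ∪ Z)

theorem exists_isBest (p : Pref O) (hS : S.Nonempty) : ∃ x, p.IsBest S x := by
  let : LinearOrder (Finset O) := linearOrderOfSTO p.strict
  obtain ⟨x, hx, hmin⟩ := S.exists_min_image (fun y => ({y} : Finset O)) hS
  exact ⟨x, hx, fun y hy hyx => (hmin y hy).resolve_left (Finset.singleton_injective.ne hyx.symm)⟩

theorem IsBest.unique (hx : p.IsBest S x) (hy : p.IsBest S y) : x = y := by
  by_contra hxy
  exact asymm (hx.2 y hy.1 (Ne.symm hxy)) (hy.2 x hx.1 hxy)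

theorem IsBest.mono (hx : p.IsBest S x) (hTS : T ⊆ S) (hxT : x ∈ T) : p.IsBest T x :=
  ⟨hxT, fun y hy => hx.2 y (hTS hy)⟩

end Pref

section

variable [DecidableEq O] {p : Pref O} {X Y : Finset O} {x : O}

theorem lexicographic_iff_strict_of_isBest_symmDiff :
    Lexicographic p ↔ ∀ ⦃X Y x⦄, x ∈ X → p.IsBest (X ∆ Y) x → p.strict X Y := by
  constructor
  · intro h X Y x hxX hx
    have hxY : x ∈ X \ Y := by
      have hxXY := hx.1
      grind [Finset.mem_symmDiff]
    have hne : X ≠ Y := Finset.symmDiff_nonempty.1 ⟨x, hx.1⟩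
    exact (h X Y hne).2 ⟨x, hxY, hx.2⟩
  · intro h X Y hXY
    constructor
    · intro hstrict
      obtain ⟨x, hx⟩ := p.exists_isBest (Finset.symmDiff_nonempty.2 hXY)
      rcases Finset.mem_union.1 hx.1 with hxX | hxY
      · exact ⟨x, hxX, hx.2⟩
      · exact absurd hstrict (asymm (h (Finset.mem_sdiff.1 hxY).1 (symmDiff_comm X Y ▸ hx)))
    · rintro ⟨x, hx, hbest⟩
      exact h (Finset.mem_sdiff.1 hx).1 ⟨Finset.mem_union_left _ hx, hbest⟩

theorem Responsive.isBest_of_isCondBest (h : Responsive p) (hXY : Disjoint X Y)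
    (hx : p.IsCondBest X Y x) : p.IsBest X x := by
  refine ⟨hx.1, fun y hy hyx => ?_⟩
  have hyZ : p.strict (insert x Y) (Y ∪ {y}) :=
    hx.2 {y} (Finset.singleton_subset_iff.2 (Finset.mem_erase.2 ⟨hyx, hy⟩))
  rw [Finset.union_singleton] at hyZ
  exact (h Y x y (Finset.disjoint_left.1 hXY hx.1) (Finset.disjoint_left.1 hXY hy)).1 hyZ

theorem Lexicographic.strict_insert_insert (h : Lexicographic p) {y z : O} (hy : y ∉ X)
    (hyz : p.strict {y} {z}) : p.strict (insert y X) (insert z X) := by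
  have hne : y ≠ z := by
    rintro rfl
    exact irrefl _ hyz
  refine lexicographic_iff_strict_of_isBest_symmDiff.1 h (Finset.mem_insert_self y X) ⟨?_, ?_⟩
  · simp [Finset.mem_symmDiff, hne, hy]
  · intro w hw hwy
    obtain rfl : w = z := by grind [Finset.mem_symmDiff]
    exact hyz

theorem Lexicographic.responsive (h : Lexicographic p) : Responsive p := by
  intro X y z hy hz
  refine ⟨fun hins => ?_, h.strict_insert_insert hy⟩
  rcases p.total {y} {z} with hyz | hyz | hzy
  · exact hyz
  · exact absurd (Finset.singleton_injective hyz ▸ hins) (irrefl _)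
  · exact absurd hins (asymm (h.strict_insert_insert hz hzy))

theorem Lexicographic.isCondBest_of_isBest (h : Lexicographic p) (hXY : Disjoint X Y)
    (hx : p.IsBest X x) : p.IsCondBest X Y x := by
  have hxX := hx.1
  refine ⟨hxX, fun Z hZ => ?_⟩
  have hxY : x ∉ Y := Finset.disjoint_left.1 hXY hxX
  have hsub : (insert x Y) ∆ (Y ∪ Z) ⊆ X := by
    grind [Finset.mem_symmDiff]
  have hmem : x ∈ (insert x Y) ∆ (Y ∪ Z) := by
    grind [Finset.mem_symmDiff]
  exact lexicographic_iff_strict_of_isBest_symmDiff.1 h (Finset.mem_insert_self x Y)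
    (hx.mono hsub hmem)

theorem Lexicographic.condLex (h : Lexicographic p) : CondLex p := by
  intro X Y hXY hX
  obtain ⟨x, hx⟩ := p.exists_isBest hX
  exact ⟨x, h.isCondBest_of_isBest hXY hx, fun z hz =>
    (h.responsive.isBest_of_isCondBest hXY hz).unique hx⟩

theorem CondLex.strict_insert (h : CondLex p) (hx : x ∉ Y) : p.strict (insert x Y) Y := by
  obtain ⟨z, ⟨hz, hbest⟩, -⟩ :=
    h {x} Y (Finset.disjoint_singleton_left.2 hx) (Finset.singleton_nonempty x)
  obtain rfl := Finset.mem_singleton.1 hz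
  simpa only [Finset.union_empty] using hbest ∅ (Finset.empty_subset _)

theorem CondLex.strict_of_ssubset (h : CondLex p) (hYX : Y ⊂ X) : p.strict X Y := by
  have hanti := (@Finset.strictAnti_iff_forall_lt_insert O (Finset O)
    (partialOrderOfSO p.strict).toPreorder id _).2 fun _ _ hx => h.strict_insert hx
  exact hanti hYX

theorem CondLex.isCondBest_of_isBest (h : CondLex p) (hr : Responsive p) (hXY : Disjoint X Y)
    (hx : p.IsBest X x) : p.IsCondBest X Y x := by
  obtain ⟨z, hz, -⟩ := h X Y hXY ⟨x, hx.1⟩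
  obtain rfl : z = x := (hr.isBest_of_isCondBest hXY hz).unique hx
  exact hz

theorem CondLex.lexicographic (h : CondLex p) (hr : Responsive p) : Lexicographic p := by
  refine lexicographic_iff_strict_of_isBest_symmDiff.2 fun X Y x hxX hx => ?_
  have hcond : p.IsCondBest (X ∆ Y) (X ∩ Y) x :=
    h.isCondBest_of_isBest hr (disjoint_symmDiff_inf X Y) hx
  have hstrict : p.strict (insert x (X ∩ Y)) Y := by
    have hZ : Y \ X ⊆ (X ∆ Y).erase x := by
      grind [Finset.mem_symmDiff]
    have hunion : X ∩ Y ∪ Y \ X = Y := by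
      rw [Finset.inter_comm, Finset.union_comm, Finset.sdiff_union_inter]
    simpa only [hunion] using hcond.2 (Y \ X) hZ
  have hsub : insert x (X ∩ Y) ⊆ X := Finset.insert_subset hxX Finset.inter_subset_left
  rcases hsub.eq_or_ssubset with heq | hssub
  · exact heq ▸ hstrict
  · exact p.trans _ _ _ (h.strict_of_ssubset hssub) hstrict

end

theorem stmt19_general {O : Type} [DecidableEq O] (p : Pref O) :
    Lexicographic p ↔ (CondLex p ∧ Responsive p) :=
  ⟨fun h => ⟨h.condLex, h.responsive⟩, fun ⟨hc, hr⟩ => hc.lexicographic hr⟩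

/-- A strict preference on bundles is lexicographic iff it is both
conditionally lexicographic and responsive. -/
theorem stmt19 {O : Type} [Fintype O] [DecidableEq O] (p : Pref O) :
    Lexicographic p ↔ (CondLex p ∧ Responsive p) :=
  stmt19_general p

end Realloc
end
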